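/- arXiv:2001.09236 — 2 statements merged into one kernel-verified Lean document; each statement's English description precedes it below -/
import Mathlib

section
/- Let D ⊆ ℝⁿ, let Q_j ⊆ D, and let F : D → ℝⁿ be any map such that F(x) ∈ ∏_{i=1}^n [ř_i, r̂_i] for every x ∈ Q_j (i.e. the rectangle over-approximates the one-step reachable set of Q_j under F). Then for every x ∈ Q_j and every u ∈ ℝⁿ, the transition probability satisfies ∏_{i=1}^n g_i(s_{i,min}) ≤ μ({y ∈ ℝⁿ : F(x) + u + y ∈ ∏_{i=1}^n [a_i, b_i]}) ≤ ∏_{i=1}^n g_i(s_{i,max}). (This is Fact 3 combined with Remark 1 of the paper: the displayed products are valid lower and upper bounds on the probability that the stochastic system x⁺ = F(x) + u + w transitions from any point of Q_j into the target rectangle.) -/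
/-!
The probability of landing in the target box, as a function of the shift `s = F x + u`, is the
product of the window integrals `g_i (s_i)`. Sliding a window across a symmetric unimodal function
gives again a symmetric unimodal function, so `g_i` depends only on `|s_i - s*_i|` and decreases
with it. On an interval of shifts `g_i` is therefore largest at the point nearest to `s*_i` and
smallest at the endpoint farthest from it, which are `s_{i,max}` and `s_{i,min}`.
-/

open MeasureTheory

/-- `f` is symmetric about `c` and unimodal with mode `c`. Monotonicity is recorded on the right of
`c` only, since symmetry carries it over to the left. -/
structure IsSymmUnimodal {α β : Type*} [AddCommGroup α] [Preorder α] [Preorder β]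
    (f : α → β) (c : α) : Prop where
  symm : ∀ t, f (c + t) = f (c - t)
  antitoneOn : AntitoneOn f (Set.Ici c)

namespace IsSymmUnimodal

lemma le_of_abs_sub_le {α β : Type*} [AddCommGroup α] [LinearOrder α] [IsOrderedAddMonoid α]
    [Preorder β] {f : α → β} {c x y : α} (hf : IsSymmUnimodal f c) (h : |x - c| ≤ |y - c|) :
    f y ≤ f x := by
  have apply_eq (z : α) : f z = f (c + |z - c|) := by
    rcases abs_choice (z - c) with hz | hz <;> rw [hz]
    · rw [add_sub_cancel]
    · rw [← sub_eq_add_neg, ← hf.symm, add_sub_cancel]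
  rw [apply_eq x, apply_eq y]
  exact hf.antitoneOn (by simp) (by simp) (by gcongr)

variable {f : ℝ → ℝ} {a b c : ℝ}

lemma intervalIntegral_comp_sub_symm (hf : IsSymmUnimodal f c) (t : ℝ) :
    ∫ x in a..b, f (x - ((a + b) / 2 - c + t)) = ∫ x in a..b, f (x - ((a + b) / 2 - c - t)) := by
  have reflect (x : ℝ) :
      f (x - ((a + b) / 2 - c + t)) = f (a + b - x - ((a + b) / 2 - c - t)) := by
    convert hf.symm (x - (a + b) / 2 - t) using 2 <;> ring
  simp only [reflect]
  rw [intervalIntegral.integral_comp_sub_left (fun x => f (x - ((a + b) / 2 - c - t))),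
    add_sub_cancel_right, add_sub_cancel_left]

lemma antitoneOn_intervalIntegral_comp_sub (hf : IsSymmUnimodal f c) (hint : LocallyIntegrable f)
    (hab : a ≤ b) :
    AntitoneOn (fun s => ∫ x in a..b, f (x - s)) (Set.Ici ((a + b) / 2 - c)) := by
  intro s hs t _ hst
  have hii (p q : ℝ) : IntervalIntegrable f volume p q :=
    (hint.integrableOn_isCompact isCompact_uIcc).intervalIntegrable
  have hii_sub (d : ℝ) : IntervalIntegrable (fun r => f (d - r)) volume s t := by
    simpa using (hii (d - s) (d - t)).comp_sub_left d
  have closer {r : ℝ} (hr : r ∈ Set.Icc s t) : f (a - r) ≤ f (b - r) := by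
    have hsr : (a + b) / 2 - c ≤ r := le_trans hs hr.1
    refine hf.le_of_abs_sub_le (le_trans ?_ (neg_le_abs (a - r - c)))
    exact abs_le.2 ⟨by linarith, by linarith⟩
  -- Moving the window from `s` to `t` gains mass at the end `a` and loses mass at the end `b`.
  have gain_le_loss : ∫ x in a - t..a - s, f x ≤ ∫ x in b - t..b - s, f x := by
    simpa only [intervalIntegral.integral_comp_sub_left] using
      intervalIntegral.integral_mono_on hst (hii_sub a) (hii_sub b) fun r hr => closer hr
  have balance := intervalIntegral.integral_interval_sub_interval_comm
    (hii (a - t) (b - t)) (hii (a - s) (b - s)) (hii _ _)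
  simp only [intervalIntegral.integral_comp_sub_right]
  linarith

theorem intervalIntegral_comp_sub (hf : IsSymmUnimodal f c) (hint : LocallyIntegrable f)
    (hab : a ≤ b) : IsSymmUnimodal (fun s => ∫ x in a..b, f (x - s)) ((a + b) / 2 - c) where
  symm := hf.intervalIntegral_comp_sub_symm
  antitoneOn := hf.antitoneOn_intervalIntegral_comp_sub hint hab

end IsSymmUnimodal

lemma ite_mem_Icc_eq_max_min {α : Type*} [LinearOrder α] {lo hi : α} (h : lo ≤ hi) (p : α) :
    (if lo ≤ p ∧ p ≤ hi then p else if hi < p then hi else lo) = max lo (min hi p) := by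
  grind

lemma abs_max_min_sub_le {α : Type*} [AddCommGroup α] [LinearOrder α] [IsOrderedAddMonoid α]
    {lo hi s : α} (hs : s ∈ Set.Icc lo hi) (p : α) : |max lo (min hi p) - p| ≤ |s - p| := by
  obtain ⟨hlo, hhi⟩ := hs
  rcases le_total p lo with hp | hp
  · rw [min_eq_right (hp.trans (hlo.trans hhi)), max_eq_left hp]
    exact abs_le_abs_of_nonneg (sub_nonneg.2 hp) (sub_le_sub_right hlo p)
  rcases le_total p hi with hp' | hp'
  · simp [hp, hp']
  · rw [min_eq_left hp', max_eq_right (hlo.trans hhi), abs_sub_comm hi, abs_sub_comm s]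
    exact abs_le_abs_of_nonneg (sub_nonneg.2 hp') (sub_le_sub_left hhi p)

lemma abs_sub_le_abs_ite_midpoint_lt_max_min_sub {K : Type*} [Field K] [LinearOrder K]
    [IsStrictOrderedRing K] {lo hi s : K} (hs : s ∈ Set.Icc lo hi) (p : K) :
    |s - p| ≤ |(if (lo + hi) / 2 < max lo (min hi p) then lo else hi) - p| := by
  obtain ⟨hlo, hhi⟩ := hs
  split_ifs with hmid
  · have mid_lt : (lo + hi) / 2 < p := by
      rcases lt_max_iff.1 hmid with h | h
      · linarith
      · exact (lt_min_iff.1 h).2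
    refine le_trans (abs_le.2 ⟨?_, ?_⟩) (neg_le_abs (lo - p)) <;> linarith
  · rcases min_le_iff.1 (max_le_iff.1 (not_lt.1 hmid)).2 with hi_le_mid | p_le_mid
    · rw [show s = hi by linarith]
    · refine le_trans (abs_le.2 ⟨?_, ?_⟩) (le_abs_self (hi - p)) <;> linarith

lemma withDensity_ofReal_Icc {ν : Measure ℝ} [NullSingletonClass ν] {f : ℝ → ℝ} {a b : ℝ}
    (hf : ∀ x, 0 ≤ f x) (hint : IntervalIntegrable f ν a b) (hab : a ≤ b) :
    (ν.withDensity fun x => ENNReal.ofReal (f x)) (Set.Icc a b) =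
      ENNReal.ofReal (∫ x in a..b, f x ∂ν) := by
  rw [withDensity_apply _ measurableSet_Icc, setLIntegral_congr Ioc_ae_eq_Icc.symm,
    intervalIntegral.integral_of_le hab,
    ofReal_integral_eq_lintegral_ofReal hint.1 (Filter.Eventually.of_forall hf)]

theorem pi_withDensity_ofReal_translate_mem_Icc {ι : Type*} [Fintype ι] {f : ι → ℝ → ℝ}
    {a b : ι → ℝ} (hf : ∀ i x, 0 ≤ f i x) (hint : ∀ i, LocallyIntegrable (f i))
    (hab : ∀ i, a i ≤ b i) (s : ι → ℝ) :
    (Measure.pi fun i => (volume : Measure ℝ).withDensity fun x => ENNReal.ofReal (f i x))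
        {y | ∀ i, s i + y i ∈ Set.Icc (a i) (b i)} =
      ENNReal.ofReal (∏ i, ∫ x in (a i)..(b i), f i (x - s i)) := by
  have box_eq : {y : ι → ℝ | ∀ i, s i + y i ∈ Set.Icc (a i) (b i)} =
      Set.univ.pi fun i => Set.Icc (a i - s i) (b i - s i) := by
    ext y
    simp only [← Set.preimage_const_add_Icc, Set.mem_univ_pi, Set.mem_preimage, Set.mem_ofPred_eq]
  rw [box_eq, Measure.pi_pi, ENNReal.ofReal_prod_of_nonneg fun i _ =>
    intervalIntegral.integral_nonneg (hab i) fun _ _ => hf i _]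
  refine Finset.prod_congr rfl fun i _ => ?_
  rw [withDensity_ofReal_Icc (hf i)
    ((hint i).integrableOn_isCompact isCompact_uIcc).intervalIntegrable
    (sub_le_sub_right (hab i) _), intervalIntegral.integral_comp_sub_right]

theorem transition_bounds_of_reachable_overapprox_general
    {ι α : Type*} [Fintype ι]
    (f : ι → ℝ → ℝ) (c a b rlo rhi u : ι → ℝ)
    (hf_nonneg : ∀ i x, 0 ≤ f i x)
    (hf_int : ∀ i, LocallyIntegrable (f i))
    (hf_unimodal : ∀ i, IsSymmUnimodal (f i) (c i))
    (hab : ∀ i, a i ≤ b i)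
    (μ : Measure (ι → ℝ))
    (hμ : μ = Measure.pi fun i =>
      (volume : Measure ℝ).withDensity fun x => ENNReal.ofReal (f i x))
    (g : ι → ℝ → ℝ)
    (hg : ∀ i s, g i s = ∫ x in (a i)..(b i), f i (x - s))
    (sstar smax smin : ι → ℝ)
    (hsstar : ∀ i, sstar i = (a i + b i) / 2 - c i)
    (hsmax : ∀ i, smax i =
      if rlo i + u i ≤ sstar i ∧ sstar i ≤ rhi i + u i then sstar i
      else if rhi i + u i < sstar i then rhi i + u i else rlo i + u i)
    (hsmin : ∀ i, smin i =
      if (rlo i + rhi i) / 2 + u i < smax i then rlo i + u i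
      else rhi i + u i)
    (Qj : Set α) (F : α → ι → ℝ)
    (hF : ∀ x ∈ Qj, ∀ i, F x i ∈ Set.Icc (rlo i) (rhi i)) :
    ∀ x ∈ Qj,
      ENNReal.ofReal (∏ i, g i (smin i)) ≤
        μ {y | ∀ i, F x i + u i + y i ∈ Set.Icc (a i) (b i)} ∧
      μ {y | ∀ i, F x i + u i + y i ∈ Set.Icc (a i) (b i)} ≤
        ENNReal.ofReal (∏ i, g i (smax i)) := by
  intro x hx
  have hshift (i) : F x i + u i ∈ Set.Icc (rlo i + u i) (rhi i + u i) := by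
    simpa using hF x hx i
  have hle (i) : rlo i + u i ≤ rhi i + u i := (hshift i).1.trans (hshift i).2
  have hmid (i) : (rlo i + rhi i) / 2 + u i = (rlo i + u i + (rhi i + u i)) / 2 := by ring
  simp only [ite_mem_Icc_eq_max_min (hle _)] at hsmax
  simp only [hsmax, hmid] at hsmin
  have hg_nonneg (i s) : 0 ≤ g i s :=
    hg i s ▸ intervalIntegral.integral_nonneg (hab i) fun _ _ => hf_nonneg i _
  have hg_unimodal (i) : IsSymmUnimodal (g i) (sstar i) := by
    simpa only [hsstar, ← hg] using (hf_unimodal i).intervalIntegral_comp_sub (hf_int i) (hab i)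
  have hprob : μ {y | ∀ i, F x i + u i + y i ∈ Set.Icc (a i) (b i)} =
      ENNReal.ofReal (∏ i, g i (F x i + u i)) := by
    simpa only [hμ, hg] using pi_withDensity_ofReal_translate_mem_Icc hf_nonneg hf_int hab _
  rw [hprob]
  constructor <;> gcongr with i
  · exact fun i _ => hg_nonneg i _
  · exact (hg_unimodal i).le_of_abs_sub_le
      (hsmin i ▸ abs_sub_le_abs_ite_midpoint_lt_max_min_sub (hshift i) (sstar i))
  · exact fun i _ => hg_nonneg i _
  · exact (hg_unimodal i).le_of_abs_sub_le
      (hsmax i ▸ abs_max_min_sub_le (hshift i) (sstar i))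

/-- Fact 3 combined with Remark 1: if the rectangle `∏ [ř_i, r̂_i]`
over-approximates the one-step reachable set of `Q_j` under `F`, then for every
`x ∈ Q_j` the probability that `F x + u + w` lands in the target rectangle
`∏ [a_i, b_i]` is bounded below by `∏ g_i (s_{i,min})` and above by
`∏ g_i (s_{i,max})`. -/
theorem transition_bounds_of_reachable_overapprox
    (n : ℕ)
    (f : Fin n → ℝ → ℝ) (c a b rlo rhi u : Fin n → ℝ)
    (hf_nonneg : ∀ i x, 0 ≤ f i x)
    (hf_int : ∀ i, Integrable (f i))
    (hf_prob : ∀ i, ∫ x, f i x = 1)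
    (hf_symm : ∀ i t, f i (c i + t) = f i (c i - t))
    (hf_mono : ∀ i, MonotoneOn (f i) (Set.Iic (c i)))
    (hf_anti : ∀ i, AntitoneOn (f i) (Set.Ici (c i)))
    (hab : ∀ i, a i < b i) (hr : ∀ i, rlo i ≤ rhi i)
    (μ : Measure (Fin n → ℝ))
    (hμ : μ = Measure.pi fun i =>
      (volume : Measure ℝ).withDensity fun x => ENNReal.ofReal (f i x))
    (g : Fin n → ℝ → ℝ)
    (hg : ∀ i s, g i s = ∫ x in (a i)..(b i), f i (x - s))
    (sstar smax smin : Fin n → ℝ)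
    (hsstar : ∀ i, sstar i = (a i + b i) / 2 - c i)
    (hsmax : ∀ i, smax i =
      if rlo i + u i ≤ sstar i ∧ sstar i ≤ rhi i + u i then sstar i
      else if rhi i + u i < sstar i then rhi i + u i else rlo i + u i)
    (hsmin : ∀ i, smin i =
      if (rlo i + rhi i) / 2 + u i < smax i then rlo i + u i
      else rhi i + u i)
    (D Qj : Set (Fin n → ℝ)) (hQj : Qj ⊆ D)
    (F : (Fin n → ℝ) → (Fin n → ℝ))
    (hF : ∀ x ∈ Qj, ∀ i, F x i ∈ Set.Icc (rlo i) (rhi i)) :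
    ∀ x ∈ Qj,
      ENNReal.ofReal (∏ i, g i (smin i)) ≤
        μ {y | ∀ i, F x i + u i + y i ∈ Set.Icc (a i) (b i)} ∧
      μ {y | ∀ i, F x i + u i + y i ∈ Set.Icc (a i) (b i)} ≤
        ENNReal.ofReal (∏ i, g i (smax i)) :=
  transition_bounds_of_reachable_overapprox_general f c a b rlo rhi u hf_nonneg
    (fun i => (hf_int i).locallyIntegrable) (fun i => ⟨hf_symm i, hf_anti i⟩) (fun i => (hab i).le)
    μ hμ g hg sstar smax smin hsstar hsmax hsmin Qj F hF
end

section
/- Let p : {1, …, m} → ℝ be monotone nonincreasing (p_k ≥ p_ℓ whenever k ≤ ℓ). Then for every feasible z' one has Σ_{ℓ=1}^m p_ℓ · z_ℓ ≥ Σ_{ℓ=1}^m p_ℓ · z'_ℓ; that is, the greedy assignment z maximizes the expected value Σ_ℓ p_ℓ z'_ℓ over all probability distributions z' respecting the interval bounds. (This is the correctness of the best-case adversary step used in the paper's upper-bound reachability maximization, Section 5.3.) -/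
/-!
This is the fractional knapsack argument. Let `c` be the first state that receives all the mass not
yet spent and not reserved for the lower bounds of later states; it exists because the upper bounds
add up to at least the total. Before `c` the greedy assignment sits at the upper bounds; after `c`
only the reserved mass is left, so it sits at the lower bounds. Any feasible `z'` thus satisfies
`z' ≤ z` before `c` and `z ≤ z'` after `c`, and each term of
`∑ ℓ, (p ℓ - p c) * (z ℓ - z' ℓ)` is nonnegative; since `z` and `z'` have the same total, this sum
is `∑ ℓ, p ℓ * z ℓ - ∑ ℓ, p ℓ * z' ℓ`.
-/

open Finset

theorem sum_smul_le_sum_smul_of_single_crossing {ι R M : Type*} [Fintype ι] [LinearOrder ι]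
    [Ring R] [PartialOrder R] [IsStrictOrderedRing R]
    [AddCommGroup M] [PartialOrder M] [IsOrderedAddMonoid M] [Module R M] [PosSMulMono R M]
    {p : ι → R} {f g : ι → M} {c : ι} (hp : Antitone p) (hlt : ∀ k < c, f k ≤ g k)
    (hgt : ∀ k > c, g k ≤ f k) (hsum : ∑ k, f k = ∑ k, g k) :
    ∑ k, p k • f k ≤ ∑ k, p k • g k := by
  have exchange (k : ι) : p k • f k + p c • g k ≤ p k • g k + p c • f k := by
    rcases lt_trichotomy k c with hk | rfl | hk
    · exact smul_add_smul_le_smul_add_smul' (hp hk.le) (hlt k hk)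
    · rw [add_comm]
    · exact smul_add_smul_le_smul_add_smul (hp hk.le) (hgt k hk)
  have total := sum_le_sum fun k (_ : k ∈ univ) => exchange k
  rwa [sum_add_distrib, sum_add_distrib, ← smul_sum, ← smul_sum, hsum,
    add_le_add_iff_right] at total

theorem sum_Iio_add_add_sum_Ioi {ι M : Type*} [Fintype ι] [LinearOrder ι]
    [LocallyFiniteOrderBot ι] [LocallyFiniteOrderTop ι] [AddCommMonoid M] (f : ι → M) (i : ι) :
    ∑ k ∈ Iio i, f k + f i + ∑ k ∈ Ioi i, f k = ∑ k, f k := by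
  rw [Fintype.sum_eq_add_sum_compl i, ← Ioi_disjUnion_Iio, sum_disjUnion]
  abel

section Greedy

variable {ι M : Type*} [LinearOrder ι] [LocallyFiniteOrderBot ι] [LocallyFiniteOrderTop ι]
  [AddCommGroup M] {lo hi z : ι → M} {t : M} {c : ι}

/-- The mass available to state `i` when a total mass `t` is distributed, the earlier states have
received `z` and every later state is guaranteed its lower bound `lo`. -/
def availableMass (lo : ι → M) (t : M) (z : ι → M) (i : ι) : M :=
  t - ∑ k ∈ Iio i, z k - ∑ k ∈ Ioi i, lo k

theorem eq_availableMass_iff {x : M} {i : ι} :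
    x = availableMass lo t z i ↔ ∑ k ∈ Iio i, z k + x + ∑ k ∈ Ioi i, lo k = t := by
  rw [availableMass, sub_sub, eq_sub_iff_add_eq, add_left_comm, ← add_assoc]

variable [LinearOrder M]

/-- The greedy assignment, characterised by its recursion: in increasing order, each state receives
as much of the available mass as its upper bound allows. -/
def IsGreedyAssignment (lo hi : ι → M) (t : M) (z : ι → M) : Prop :=
  ∀ i, z i = min (hi i) (availableMass lo t z i)

/-- The feasible assignments of a total mass `t` under the interval bounds `lo` and `hi`; for
`t = 1` and `0 ≤ lo` these are the probability distributions compatible with a row of an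
interval-valued Markov chain. -/
structure IsFeasibleAssignment [Fintype ι] (lo hi : ι → M) (t : M) (z : ι → M) : Prop where
  lower_le : ∀ i, lo i ≤ z i
  le_upper : ∀ i, z i ≤ hi i
  sum_eq : ∑ i, z i = t

namespace IsGreedyAssignment

theorem eq_upper_of_ne_availableMass (hz : IsGreedyAssignment lo hi t z) {i : ι}
    (hne : z i ≠ availableMass lo t z i) : z i = hi i :=
  (hz i).trans ((min_choice _ _).resolve_right fun h => hne ((hz i).trans h))

theorem eq_lower_of_eq_availableMass_of_lt (hz : IsGreedyAssignment lo hi t z) (hle : lo ≤ hi)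
    (hc : z c = availableMass lo t z c) {j : ι} (hj : c < j) : z j = lo j := by
  let _ : Fintype ι := ⟨Iic c ∪ Ioi c, fun k => by simp [le_or_gt]⟩
  -- `w` has total `t`, so at a state after `c` up to which `z` and `w` agree, the available mass is
  -- exactly the lower bound.
  let w : ι → M := fun k => if k ≤ c then z k else lo k
  have w_of_le {k : ι} (hk : k ≤ c) : w k = z k := if_pos hk
  have w_of_lt {k : ι} (hk : c < k) : w k = lo k := if_neg hk.not_ge
  have sum_w : ∑ k, w k = t := by
    rw [← sum_Iio_add_add_sum_Ioi w c, w_of_le le_rfl,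
      sum_congr rfl fun k hk => w_of_le (mem_Iio.mp hk).le,
      sum_congr rfl fun k hk => w_of_lt (mem_Ioi.mp hk)]
    exact eq_availableMass_iff.mp hc
  suffices z_eq_w : ∀ k, z k = w k from (z_eq_w j).trans (w_of_lt hj)
  intro k
  induction k using WellFoundedLT.induction with
  | ind k ih =>
    rcases le_or_gt k c with hk | hk
    · exact (w_of_le hk).symm
    have available_eq : lo k = availableMass lo t z k := by
      rw [eq_availableMass_iff, sum_congr rfl fun l hl => ih l (mem_Iio.mp hl),
        ← sum_congr rfl fun l hl => w_of_lt (hk.trans (mem_Ioi.mp hl)), ← w_of_lt hk,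
        sum_Iio_add_add_sum_Ioi, sum_w]
    rw [hz k, ← available_eq, min_eq_right (hle k), w_of_lt hk]

variable [Fintype ι]

theorem sum_eq_of_eq_availableMass (hz : IsGreedyAssignment lo hi t z) (hle : lo ≤ hi)
    (hc : z c = availableMass lo t z c) : ∑ k, z k = t := by
  rw [← sum_Iio_add_add_sum_Ioi z c,
    sum_congr rfl fun k hk => hz.eq_lower_of_eq_availableMass_of_lt hle hc (mem_Ioi.mp hk)]
  exact eq_availableMass_iff.mp hc

theorem exists_eq_availableMass [Nonempty ι] [IsOrderedAddMonoid M]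
    (hz : IsGreedyAssignment lo hi t z) (ht : t ≤ ∑ k, hi k) :
    ∃ c, z c = availableMass lo t z c := by
  by_contra! z_ne
  have z_eq_hi : z = hi := funext fun k => hz.eq_upper_of_ne_availableMass (z_ne k)
  obtain ⟨last, le_last⟩ := Finite.exists_max (id : ι → ι)
  have Ioi_last : Ioi last = ∅ := Ioi_eq_empty.mpr fun k _ => le_last k
  have sum_z : ∑ k, z k = ∑ k ∈ Iio last, z k + z last := by
    rw [← sum_Iio_add_add_sum_Ioi z last, Ioi_last, sum_empty, add_zero]
  refine z_ne last (le_antisymm ((hz last).trans_le (min_le_right _ _)) ?_)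
  rw [availableMass, Ioi_last, sum_empty, sub_zero, sub_le_iff_le_add', ← sum_z, z_eq_hi]
  exact ht

theorem exists_first_eq_availableMass [Nonempty ι] [IsOrderedAddMonoid M]
    (hz : IsGreedyAssignment lo hi t z) (ht : t ≤ ∑ k, hi k) :
    ∃ c, z c = availableMass lo t z c ∧ ∀ k < c, z k = hi k := by
  obtain ⟨c, hc, c_first⟩ := exists_minimal_of_wellFoundedLT _ (hz.exists_eq_availableMass ht)
  refine ⟨c, hc, fun k hk => hz.eq_upper_of_ne_availableMass fun h => ?_⟩
  exact hk.not_ge (c_first h hk.le)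

end IsGreedyAssignment

theorem greedy_assignment_maximizes_general {R : Type*} [Fintype ι] [IsOrderedAddMonoid M]
    [Ring R] [PartialOrder R] [IsStrictOrderedRing R] [Module R M] [PosSMulMono R M]
    (hz : IsGreedyAssignment lo hi t z) {p : ι → R} (hp : Antitone p)
    {z' : ι → M} (hz' : IsFeasibleAssignment lo hi t z') :
    ∑ i, p i • z' i ≤ ∑ i, p i • z i := by
  cases isEmpty_or_nonempty ι
  · simp
  have hle : lo ≤ hi := fun i => (hz'.lower_le i).trans (hz'.le_upper i)
  have ht : t ≤ ∑ i, hi i := hz'.sum_eq.ge.trans (sum_le_sum fun i _ => hz'.le_upper i)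
  obtain ⟨c, hc, eq_upper⟩ := hz.exists_first_eq_availableMass ht
  refine sum_smul_le_sum_smul_of_single_crossing (c := c) hp (fun k hk => ?_) (fun k hk => ?_) ?_
  · exact (hz'.le_upper k).trans_eq (eq_upper k hk).symm
  · exact (hz.eq_lower_of_eq_availableMass_of_lt hle hc hk).trans_le (hz'.lower_le k)
  · exact hz'.sum_eq.trans (hz.sum_eq_of_eq_availableMass hle hc).symm

end Greedy

/-- Correctness of the best-case adversary step of interval value iteration:
for `p` monotone nonincreasing, the greedy assignment `z` maximizes the
expected value `∑ ℓ, p ℓ * z' ℓ` over all feasible distributions `z'`. -/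
theorem greedy_assignment_maximizes
    (m : ℕ) (hm : 1 ≤ m)
    (Tlo Thi : Fin m → ℝ)
    (h0 : ∀ ℓ, 0 ≤ Tlo ℓ) (hle : ∀ ℓ, Tlo ℓ ≤ Thi ℓ)
    (hsumlo : ∑ ℓ, Tlo ℓ ≤ 1) (hsumhi : 1 ≤ ∑ ℓ, Thi ℓ)
    (z : Fin m → ℝ)
    (hz : ∀ ℓ, z ℓ = min (Thi ℓ)
      (1 - ∑ k ∈ Finset.Iio ℓ, z k - ∑ k ∈ Finset.Ioi ℓ, Tlo k))
    (p : Fin m → ℝ) (hp : Antitone p) :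
    ∀ z' : Fin m → ℝ, (∀ ℓ, Tlo ℓ ≤ z' ℓ ∧ z' ℓ ≤ Thi ℓ) → ∑ ℓ, z' ℓ = 1 →
      ∑ ℓ, p ℓ * z' ℓ ≤ ∑ ℓ, p ℓ * z ℓ := by
  intro z' hz' hsum
  exact greedy_assignment_maximizes_general hz hp
    ⟨fun ℓ => (hz' ℓ).1, fun ℓ => (hz' ℓ).2, hsum⟩
end
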